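/- arXiv:1103.4674 — 3 statements merged into one kernel-verified Lean document; each statement's English description precedes it below -/
import Mathlib

section
/- For all real numbers x, y, z one has the integral representation D(x, y, z) = ∫₀ˣ H(y+z, s) ds. -/
open Real

/-- Mirzakhani's kernel H(x, y). -/
noncomputable def H (x y : ℝ) : ℝ :=
  1 / (1 + Real.exp ((x + y) / 2)) + 1 / (1 + Real.exp ((x - y) / 2))

/-- The function D(x, y, z) from the generalised McShane identity. -/
noncomputable def D (x y z : ℝ) : ℝ :=
  2 * Real.log ((Real.exp (x / 2) + Real.exp ((y + z) / 2)) /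
      (Real.exp (-x / 2) + Real.exp ((y + z) / 2)))

/-!
Differentiating `2 * log (e ^ u + e ^ ((y + z) / 2))` at `u = x / 2` and at `u = -x / 2` produces
the two logistic terms of `H (y + z) x`. Hence `fun x ↦ D x y z` is a primitive of `H (y + z)`, and
it vanishes at `0`.
-/

theorem continuous_uncurry_H : Continuous (Function.uncurry H) := by
  unfold Function.uncurry H
  fun_prop (disch := intro; positivity)

theorem hasDerivAt_log_exp_add_exp (c u : ℝ) :
    HasDerivAt (fun v ↦ log (exp v + exp c)) (1 / (1 + exp (c - u))) u := by
  have hlog : HasDerivAt (fun v ↦ log (exp v + exp c)) (exp u / (exp u + exp c)) u :=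
    ((hasDerivAt_exp u).add_const (exp c)).log (by positivity)
  refine hlog.congr_deriv ?_
  rw [exp_sub]
  field_simp

theorem D_eq_log_sub_log (x y z : ℝ) :
    D x y z = 2 * log (exp (x / 2) + exp ((y + z) / 2)) -
      2 * log (exp (-x / 2) + exp ((y + z) / 2)) := by
  rw [D, log_div (by positivity) (by positivity), mul_sub]

theorem D_zero_left (y z : ℝ) : D 0 y z = 0 := by
  rw [D_eq_log_sub_log, neg_zero, sub_self]

theorem hasDerivAt_D (x y z : ℝ) : HasDerivAt (fun s ↦ D s y z) (H (y + z) x) x := by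
  simp only [D_eq_log_sub_log]
  have hpos := (hasDerivAt_log_exp_add_exp ((y + z) / 2) (x / 2)).comp x
    ((hasDerivAt_id' x).div_const 2)
  have hneg := (hasDerivAt_log_exp_add_exp ((y + z) / 2) (-x / 2)).comp x
    ((hasDerivAt_neg' x).div_const 2)
  refine ((hpos.const_mul 2).sub (hneg.const_mul 2)).congr_deriv ?_
  have hsub : (y + z) / 2 - x / 2 = (y + z - x) / 2 := by ring
  have hadd : (y + z) / 2 - -x / 2 = (y + z + x) / 2 := by ring
  rw [H, hsub, hadd]
  ring

theorem D_eq_integral (x y z : ℝ) :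
    D x y z = ∫ s in (0 : ℝ)..x, H (y + z) s := by
  have hint : IntervalIntegrable (H (y + z)) MeasureTheory.volume 0 x :=
    (continuous_uncurry_H.uncurry_left (y + z)).intervalIntegrable 0 x
  rw [intervalIntegral.integral_eq_sub_of_hasDerivAt (fun s _ ↦ hasDerivAt_D s y z) hint,
    D_zero_left, sub_zero]
end

section
/- For all fixed real numbers y and z, the limit as x tends to 0 from above of R(x, y, z)/x equals H(z, y) = 1/(1 + exp((z+y)/2)) + 1/(1 + exp((z−y)/2)). -/
open Real Filter Topology

/-- The function R(x, y, z) from the generalised McShane identity. -/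
noncomputable def R (x y z : ℝ) : ℝ :=
  x - Real.log ((Real.cosh (y / 2) + Real.cosh ((x + z) / 2)) /
      (Real.cosh (y / 2) + Real.cosh ((x - z) / 2)))

/-! The quotient `R x y z / x` is the difference quotient of `R · y z` at `0`, where `R` vanishes.
Since `1 - H t y` is twice the logarithmic derivative of `cosh (y / 2) + cosh (t / 2)` in `t`,
differentiating `R` gives Mirzakhani's identity `∂R/∂x = (H z (x + y) + H z (x - y)) / 2`;
at `x = 0` the right-hand side is `H z y` because `H` is even in its second argument. -/

theorem cosh_add_cosh_pos (a b : ℝ) : 0 < cosh a + cosh b :=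
  add_pos (cosh_pos a) (cosh_pos b)

theorem two_mul_exp_mul_cosh_add_cosh (a b : ℝ) :
    2 * exp b * (cosh a + cosh b) = (1 + exp (b + a)) * (1 + exp (b - a)) := by
  simp only [cosh_eq, sub_eq_add_neg, exp_add, exp_neg]
  field_simp
  ring

theorem one_div_one_add_exp_add_one_div_one_add_exp (a b : ℝ) :
    1 / (1 + exp (b + a)) + 1 / (1 + exp (b - a)) = 1 - sinh b / (cosh a + cosh b) := by
  have hD := (cosh_add_cosh_pos a b).ne'
  have numerator : (1 + exp (b - a)) + (1 + exp (b + a)) =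
      2 * exp b * (cosh a + cosh b - sinh b) := by
    simp only [cosh_eq, sinh_eq, sub_eq_add_neg, exp_add, exp_neg]
    field_simp
    ring
  calc 1 / (1 + exp (b + a)) + 1 / (1 + exp (b - a))
      = ((1 + exp (b - a)) + (1 + exp (b + a))) / ((1 + exp (b + a)) * (1 + exp (b - a))) := by
        field_simp
    _ = 1 - sinh b / (cosh a + cosh b) := by
        rw [numerator, ← two_mul_exp_mul_cosh_add_cosh]
        field_simp

theorem H_eq_one_sub_sinh_div (x y : ℝ) :
    H x y = 1 - sinh (x / 2) / (cosh (y / 2) + cosh (x / 2)) := by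
  rw [H, add_div, sub_div, one_div_one_add_exp_add_one_div_one_add_exp]

theorem H_neg_left (x y : ℝ) : H (-x) y = 2 - H x y := by
  simp only [H_eq_one_sub_sinh_div, neg_div, sinh_neg, cosh_neg]
  ring

theorem H_neg_right (x y : ℝ) : H x (-y) = H x y := by
  rw [H, H, ← sub_eq_add_neg, sub_neg_eq_add, add_comm]

theorem H_add_left_add_H_sub_left (x y z : ℝ) :
    H (z + x) y + H (z - x) y = H z (x + y) + H z (x - y) := by
  unfold H
  ring_nf

theorem hasDerivAt_log_cosh_add_cosh (y t : ℝ) :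
    HasDerivAt (fun t => log (cosh (y / 2) + cosh (t / 2))) ((1 - H t y) / 2) t := by
  have hcosh : HasDerivAt (fun t => cosh (y / 2) + cosh (t / 2)) (sinh (t / 2) * (1 / 2)) t :=
    (((hasDerivAt_id t).div_const 2).cosh).const_add _
  refine (hcosh.log (cosh_add_cosh_pos _ _).ne').congr_deriv ?_
  rw [H_eq_one_sub_sinh_div]
  ring

theorem R_eq_sub_log_sub_log (x y z : ℝ) :
    R x y z = x - (log (cosh (y / 2) + cosh ((x + z) / 2)) -
      log (cosh (y / 2) + cosh ((x - z) / 2))) := by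
  rw [R, log_div (cosh_add_cosh_pos _ _).ne' (cosh_add_cosh_pos _ _).ne']

theorem R_zero_left (y z : ℝ) : R 0 y z = 0 := by
  simp only [R_eq_sub_log_sub_log, zero_add, zero_sub, neg_div, cosh_neg, sub_self]

theorem hasDerivAt_R (x y z : ℝ) :
    HasDerivAt (fun x => R x y z) ((H z (x + y) + H z (x - y)) / 2) x := by
  have hadd := (hasDerivAt_log_cosh_add_cosh y (x + z)).comp_add_const x z
  have hsub := (hasDerivAt_log_cosh_add_cosh y (x - z)).comp_sub_const x z
  simp only [R_eq_sub_log_sub_log]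
  refine ((hasDerivAt_id' x).sub (hadd.sub hsub)).congr_deriv ?_
  have hreflect : H (z - x) y = 2 - H (x - z) y := by rw [← H_neg_left, neg_sub]
  rw [← H_add_left_add_H_sub_left, hreflect, add_comm z x]
  ring

theorem hasDerivAt_R_zero (y z : ℝ) : HasDerivAt (fun x => R x y z) (H z y) 0 := by
  simpa only [zero_add, zero_sub, H_neg_right, add_self_div_two] using hasDerivAt_R 0 y z

theorem R_div_tendsto_general (y z : ℝ) :
    Tendsto (fun x => R x y z / x) (𝓝[≠] (0 : ℝ)) (𝓝 (H z y)) := by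
  simpa only [zero_add, R_zero_left, sub_zero, smul_eq_mul, inv_mul_eq_div] using
    (hasDerivAt_R_zero y z).tendsto_slope_zero

theorem R_div_tendsto (y z : ℝ) :
    Tendsto (fun x => R x y z / x) (𝓝[>] (0 : ℝ)) (𝓝 (H z y)) :=
  (R_div_tendsto_general y z).mono_left (nhdsGT_le_nhdsNE 0)
end

section
/- For every real number t, the function x ↦ x·H(x, t) is integrable on (0, ∞) and ∫₀^∞ x H(x, t) dx = t²/2 + 2π²/3. -/
open Real MeasureTheory

/-!
With `f x = sigmoid (-x)`, the integrand `x * H x t` is `2 * g (x / 2)` for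
`g u = u * (f (u + a) + f (u - a))` and `a = t / 2`. Translating the two summands of `g`, its
integral becomes `∫ (u - a) * f u` over `(a, ∞)` plus `∫ (u + a) * f u` over `(-a, ∞)`. Moving both
endpoints to `0` leaves `2 * ∫ u * f u` over `(0, ∞)`, and the reflection formula
`f u + f (-u) = 1` turns the correction terms into `∫ (a - u)` over `(0, a)`, which is `a ^ 2 / 2`.
The remaining constant is the Fermi–Dirac integral `∫ u / (1 + exp u) = π ^ 2 / 12`, obtained from
the expansion of `f` in powers of `exp (-u)`.
-/

open Set Filter

section Reflection

variable {E : Type*} [NormedAddCommGroup E] [NormedSpace ℝ E] {f : ℝ → E} {c : E}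

lemma integrableOn_Ioi_sub_smul (hf : LocallyIntegrable f)
    (hxf : IntegrableOn (fun x ↦ x • f x) (Ioi 0)) (a b : ℝ) :
    IntegrableOn (fun x ↦ (x - a) • f x) (Ioi b) := by
  have hloc : LocallyIntegrable fun x ↦ (x - a) • f x := hf.continuous_smul (by fun_prop)
  have hxf_atTop : IntegrableAtFilter (fun x ↦ x • f x) atTop := ⟨Ioi 0, Ioi_mem_atTop 0, hxf⟩
  have hsub : (fun x : ℝ ↦ x - a) =O[atTop] fun x ↦ x :=
    (Asymptotics.isBigO_refl _ _).sub (Asymptotics.isLittleO_const_id_atTop a).isBigO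
  have hatTop : IntegrableAtFilter (fun x ↦ (x - a) • f x) atTop :=
    (hsub.smul (Asymptotics.isBigO_refl f _)).integrableAtFilter
      hloc.aestronglyMeasurable.stronglyMeasurableAtFilter hxf_atTop
  exact (integrableOn_Ici_iff_integrableAtFilter_atTop.mpr
    ⟨hatTop, hloc.locallyIntegrableOn _⟩).mono_set Ioi_subset_Ici_self

lemma integrableOn_Ioi_smul_comp_add_right_iff (a : ℝ) :
    IntegrableOn (fun x ↦ x • f (x + a)) (Ioi 0) ↔
      IntegrableOn (fun x ↦ (x - a) • f x) (Ioi a) := by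
  simpa [Function.comp_def] using
    (measurePreserving_add_right volume a).integrableOn_comp_preimage
      (measurableEmbedding_addRight a) (f := fun x ↦ (x - a) • f x) (s := Ioi a)

lemma integral_Ioi_smul_comp_add_right (a : ℝ) :
    ∫ x in Ioi 0, x • f (x + a) = ∫ x in Ioi a, (x - a) • f x := by
  simpa using (measurePreserving_add_right volume a).setIntegral_preimage_emb
    (measurableEmbedding_addRight a) (fun x ↦ (x - a) • f x) (Ioi a)

lemma integral_add_smul_sub_integral_sub_smul_of_add_comp_neg [CompleteSpace E]
    (hf : LocallyIntegrable f) (hc : ∀ x, f x + f (-x) = c) (a : ℝ) :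
    (∫ x in (-a)..0, (x + a) • f x) - ∫ x in (0)..a, (x - a) • f x = (a ^ 2 / 2) • c := by
  have hint (b u v : ℝ) : IntervalIntegrable (fun x ↦ (x + b) • f x) volume u v :=
    (hf.continuous_smul (continuous_add_const b)).integrableOn_isCompact isCompact_uIcc
      |>.intervalIntegrable
  have hneg : ∫ x in (-a)..0, (x + a) • f x = ∫ x in (0)..a, (-x + a) • f (-x) := by
    simpa using (intervalIntegral.integral_comp_neg (a := 0) (b := a) fun x ↦ (x + a) • f x).symm
  calc (∫ x in (-a)..0, (x + a) • f x) - ∫ x in (0)..a, (x - a) • f x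
    _ = ∫ x in (0)..a, ((-x + a) • f (-x) - (x - a) • f x) := by
      rw [hneg, intervalIntegral.integral_sub]
      · simpa using (IntervalIntegrable.iff_comp_neg).mp (hint a 0 (-a))
      · exact hint (-a) 0 a
    _ = ∫ x in (0)..a, (a - x) • c := by
      congr 1 with x
      rw [← hc x]
      module
    _ = (a ^ 2 / 2) • c := by
      rw [intervalIntegral.integral_smul_const]
      congr 1
      simp only [intervalIntegral.integral_comp_sub_left (fun x ↦ x), sub_self, sub_zero,
        integral_id]
      ring

theorem integral_Ioi_smul_comp_add_add_comp_sub [CompleteSpace E] (hf : LocallyIntegrable f)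
    (hxf : IntegrableOn (fun x ↦ x • f x) (Ioi 0)) (hc : ∀ x, f x + f (-x) = c) (a : ℝ) :
    IntegrableOn (fun x ↦ x • (f (x + a) + f (x - a))) (Ioi 0) ∧
    ∫ x in Ioi 0, x • (f (x + a) + f (x - a)) =
      (a ^ 2 / 2) • c + (2 : ℝ) • ∫ x in Ioi 0, x • f x := by
  have hint := integrableOn_Ioi_sub_smul hf hxf
  have hadd (b : ℝ) : IntegrableOn (fun x ↦ x • f (x + b)) (Ioi 0) :=
    (integrableOn_Ioi_smul_comp_add_right_iff b).mpr (hint b b)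
  have hright : ∫ x in Ioi a, (x - a) • f x =
      (∫ x in Ioi 0, (x - a) • f x) - ∫ x in (0)..a, (x - a) • f x := by
    rw [← intervalIntegral.integral_Ioi_sub_Ioi' (hint a 0) (hint a a), sub_sub_cancel]
  have hleft : ∫ x in Ioi (-a), (x - -a) • f x =
      (∫ x in (-a)..0, (x + a) • f x) + ∫ x in Ioi 0, (x - -a) • f x := by
    rw [← intervalIntegral.integral_interval_add_Ioi (hint (-a) (-a)) (hint (-a) 0)]
    simp only [sub_neg_eq_add]
  have htails : (∫ x in Ioi 0, (x - a) • f x) + ∫ x in Ioi 0, (x - -a) • f x =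
      (2 : ℝ) • ∫ x in Ioi 0, x • f x := by
    rw [← integral_add (hint a 0) (hint (-a) 0), ← integral_smul]
    congr 1 with x
    module
  simp only [sub_eq_add_neg _ a, smul_add]
  refine ⟨(hadd a).add (hadd (-a)), ?_⟩
  rw [integral_add (hadd a) (hadd (-a)), integral_Ioi_smul_comp_add_right,
    integral_Ioi_smul_comp_add_right, hright, hleft, ← htails,
    ← integral_add_smul_sub_integral_sub_smul_of_add_comp_neg hf hc a]
  abel

end Reflection

lemma hasSum_neg_one_pow_div_succ_pow_two_mul {k : ℕ} (hk : k ≠ 0) :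
    HasSum (fun n : ℕ ↦ (-1 : ℝ) ^ n / (n + 1) ^ (2 * k))
      ((-1) ^ k * (2 * π) ^ (2 * k) / 2 / (2 * k).factorial * bernoulliFun (2 * k) 2⁻¹) := by
  have hcos (n : ℕ) : cos (2 * π * n * 2⁻¹) = (-1) ^ n := by
    rw [← cos_nat_mul_pi]
    ring_nf
  have h := (hasSum_one_div_nat_pow_mul_cos hk (x := 2⁻¹) (by norm_num)).neg
  rw [← hasSum_nat_add_iff' 1] at h
  convert! h using 1
  · ext n
    rw [hcos]
    push_cast
    ring
  · have hzero : 1 / ((0 : ℕ) : ℝ) ^ (2 * k) = 0 := by simp [hk]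
    rw [Finset.sum_range_one, hzero, zero_mul, neg_zero, sub_zero, bernoulliFun,
      Polynomial.eval_map_algebraMap]
    ring

lemma hasSum_sigmoid_neg {x : ℝ} (hx : 0 < x) :
    HasSum (fun n : ℕ ↦ (-1) ^ n * exp (-(n + 1) * x)) (sigmoid (-x)) := by
  have hlt : ‖-exp (-x)‖ < 1 := by simpa using hx
  convert! (hasSum_geometric_of_norm_lt_one hlt).mul_left (exp (-x)) using 1
  · ext n
    rw [neg_pow (exp _), ← exp_nat_mul, mul_left_comm, ← exp_add]
    ring_nf
  · rw [← sigmoid_mul_rexp_neg, sigmoid_def, sub_neg_eq_add, mul_comm]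

lemma hasSum_mellin_sigmoid_neg {s : ℂ} (hs : 1 < s.re) :
    HasSum (fun n : ℕ ↦ Complex.Gamma s * (-1) ^ n / ((n + 1 : ℝ) : ℂ) ^ s)
      (mellin (fun x ↦ (sigmoid (-x) : ℂ)) s) := by
  refine hasSum_mellin (fun n ↦ Or.inr (by positivity)) (by linarith) (fun x hx ↦ ?_) ?_
  · exact_mod_cast hasSum_sigmoid_neg hx
  · simpa using (summable_nat_add_iff 1).mpr (Real.summable_one_div_nat_rpow.mpr hs)

lemma integral_Ioi_mul_sigmoid_neg : ∫ x in Ioi 0, x * sigmoid (-x) = π ^ 2 / 12 := by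
  have hmellin : mellin (fun x ↦ (sigmoid (-x) : ℂ)) 2 =
      ((∫ x in Ioi 0, x * sigmoid (-x) : ℝ) : ℂ) := by
    rw [mellin, ← integral_complex_ofReal, show (2 : ℂ) - 1 = 1 by norm_num]
    simp only [Complex.cpow_one, smul_eq_mul, Complex.ofReal_mul]
  have hseries : HasSum (fun n : ℕ ↦ (-1 : ℝ) ^ n / (n + 1) ^ 2)
      (∫ x in Ioi 0, x * sigmoid (-x)) := by
    have h := hasSum_mellin_sigmoid_neg (s := 2) (by norm_num)
    rw [hmellin, Complex.Gamma_ofNat_eq_factorial] at h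
    simp only [Nat.factorial_one, Nat.cast_one, one_mul, Complex.cpow_ofNat] at h
    exact_mod_cast h
  have heta := hasSum_neg_one_pow_div_succ_pow_two_mul one_ne_zero
  simp only [mul_one, bernoulliFun_two] at heta
  rw [hseries.unique heta]
  simp only [Nat.factorial_two, Nat.cast_ofNat]
  ring

lemma integrableOn_Ioi_rpow_mul_sigmoid_neg {s : ℝ} (hs : 0 < s) :
    IntegrableOn (fun x ↦ x ^ (s - 1) * sigmoid (-x)) (Ioi 0) := by
  have hle (x : ℝ) : sigmoid (-x) ≤ exp (-x) := by
    rw [← sigmoid_mul_rexp_neg]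
    exact mul_le_of_le_one_left (exp_pos _).le (sigmoid_le_one x)
  refine (GammaIntegral_convergent hs).mono' (by fun_prop) ?_
  filter_upwards [ae_restrict_mem measurableSet_Ioi] with x (hx : 0 < x)
  rw [norm_of_nonneg (mul_nonneg (by positivity) (sigmoid_nonneg _)), mul_comm]
  gcongr
  exact hle x

lemma integral_Ioi_mul_sigmoid_add_sigmoid (a : ℝ) :
    IntegrableOn (fun x ↦ x * (sigmoid (-(x + a)) + sigmoid (-(x - a)))) (Ioi 0) ∧
    ∫ x in Ioi 0, x * (sigmoid (-(x + a)) + sigmoid (-(x - a))) = a ^ 2 / 2 + π ^ 2 / 6 := by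
  have hloc : LocallyIntegrable fun x ↦ sigmoid (-x) :=
    (continuous_sigmoid.comp continuous_neg).locallyIntegrable
  have hmul : IntegrableOn (fun x ↦ x • sigmoid (-x)) (Ioi 0) := by
    simpa [show (2 : ℝ) - 1 = 1 by norm_num] using
      integrableOn_Ioi_rpow_mul_sigmoid_neg (s := 2) two_pos
  have hrefl (x : ℝ) : sigmoid (-x) + sigmoid (- -x) = 1 := by
    rw [neg_neg, sigmoid_neg, sub_add_cancel]
  obtain ⟨hint, heq⟩ := integral_Ioi_smul_comp_add_add_comp_sub hloc hmul hrefl a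
  refine ⟨hint, heq.trans ?_⟩
  simp only [smul_eq_mul, integral_Ioi_mul_sigmoid_neg]
  ring

lemma H_eq_sigmoid_add_sigmoid (x y : ℝ) :
    H x y = sigmoid (-(x / 2 + y / 2)) + sigmoid (-(x / 2 - y / 2)) := by
  simp only [H, sigmoid_def, neg_neg, one_div, add_div, sub_div]

theorem integral_x_H (t : ℝ) :
    IntegrableOn (fun x : ℝ => x * H x t) (Set.Ioi 0) ∧
    ∫ x in Set.Ioi (0 : ℝ), x * H x t = t ^ 2 / 2 + 2 * π ^ 2 / 3 := by
  obtain ⟨hint, heq⟩ := integral_Ioi_mul_sigmoid_add_sigmoid (t / 2)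
  let g (u : ℝ) : ℝ := u * (sigmoid (-(u + t / 2)) + sigmoid (-(u - t / 2)))
  have hscale : (fun x ↦ x * H x t) = fun x ↦ 2 * g (2⁻¹ * x) := by
    ext x
    simp only [g, H_eq_sigmoid_add_sigmoid, inv_mul_eq_div]
    ring
  rw [hscale]
  constructor
  · have hg : IntegrableOn (fun x ↦ g (2⁻¹ * x)) (Ioi 0) := by
      rwa [integrableOn_Ioi_comp_mul_left_iff g 0 (by norm_num), mul_zero]
    exact hg.const_mul 2
  · rw [integral_const_mul, integral_comp_mul_left_Ioi g 0 (by norm_num), mul_zero, heq,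
      smul_eq_mul]
    ring
end
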